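/- arXiv:2007.08283 — 7 statements merged into one kernel-verified Lean document; each statement's English description precedes it below -/
import Mathlib

section
/- Let X̃ be a replacement variable for X_j relative to G (conditions (i) and (ii) of the setup; for this statement only conditional independence of X̃ from X_U given X_G is needed from (ii)). Then the law of the triple ((X_G, X_U), X̃) under μ equals the composition-product of the law of (X_G, X_U) under μ with the kernel (g, u) ↦ (condDistrib X_j X_G μ) g; that is, the interventional distribution factorizes as P(X̃, X_G, X_U) = P(X_j | X_G) · P(X_G, X_U). -/
open MeasureTheory ProbabilityTheory
open scoped ProbabilityTheory

theorem prodMkRight_ae_eq_prodMkRight {α β γ : Type*} [MeasurableSpace α] [MeasurableSpace β]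
    [MeasurableSpace γ] {ρ : Measure (α × γ)} {κ η : Kernel α β} (h : κ =ᵐ[ρ.fst] η) :
    κ.prodMkRight γ =ᵐ[ρ] η.prodMkRight γ :=
  ae_of_ae_map measurable_fst.aemeasurable h

section ConditionalIndependence

variable {Ω Ej EU EG : Type*} [MeasurableSpace Ω] [StandardBorelSpace Ω]
  [MeasurableSpace Ej] [StandardBorelSpace Ej] [Nonempty Ej]
  [MeasurableSpace EU] [StandardBorelSpace EU] [Nonempty EU] [MeasurableSpace EG]
  {μ : Measure Ω} [IsFiniteMeasure μ] {Xtil : Ω → Ej} {XU : Ω → EU} {XG : Ω → EG}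
  {κ : Kernel EG Ej}

theorem condDistrib_prodMk_ae_eq_prodMkRight_of_condIndepFun
    (hXtil : Measurable Xtil) (hXU : Measurable XU) (hXG : Measurable XG)
    (hκ : condDistrib Xtil XG μ =ᵐ[μ.map XG] κ) (hci : Xtil ⟂ᵢ[XG, hXG; μ] XU) :
    condDistrib Xtil (fun ω => (XG ω, XU ω)) μ
      =ᵐ[μ.map (fun ω => (XG ω, XU ω))] κ.prodMkRight EU := by
  have drop_XU : condDistrib Xtil (fun ω => (XG ω, XU ω)) μ
      =ᵐ[μ.map (fun ω => (XG ω, XU ω))] (condDistrib Xtil XG μ).prodMkRight EU :=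
    (condIndepFun_iff_condDistrib_prod_ae_eq_prodMkRight hXtil hXU hXG).mp hci.symm
  rw [← Measure.fst_map_prodMk hXU] at hκ
  exact drop_XU.trans (prodMkRight_ae_eq_prodMkRight hκ)

theorem rfi_interventional_factorization_general [IsFiniteKernel κ]
    (hXtil : Measurable Xtil) (hXU : Measurable XU) (hXG : Measurable XG)
    (hκ : condDistrib Xtil XG μ =ᵐ[μ.map XG] κ) (hci : Xtil ⟂ᵢ[XG, hXG; μ] XU) :
    μ.map (fun ω => ((XG ω, XU ω), Xtil ω))
      = (μ.map (fun ω => (XG ω, XU ω))) ⊗ₘ (κ.prodMkRight EU) :=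
  (condDistrib_ae_eq_iff_measure_eq_compProd _ hXtil.aemeasurable _).mp
    (condDistrib_prodMk_ae_eq_prodMkRight_of_condIndepFun hXtil hXU hXG hκ hci)

end ConditionalIndependence

/-- The interventional distribution factorizes: the law of `((X_G, X_U), X̃)` is the
composition-product of the law of `(X_G, X_U)` with the kernel `(g, u) ↦ P(X_j | X_G = g)`. -/
theorem rfi_interventional_factorization
    {Ω Ej EU EG : Type*}
    [MeasurableSpace Ω] [StandardBorelSpace Ω] [Nonempty Ω]
    [MeasurableSpace Ej] [StandardBorelSpace Ej] [Nonempty Ej]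
    [MeasurableSpace EU] [StandardBorelSpace EU] [Nonempty EU]
    [MeasurableSpace EG] [StandardBorelSpace EG] [Nonempty EG]
    (μ : Measure Ω) [IsProbabilityMeasure μ]
    (Xj Xtil : Ω → Ej) (XU : Ω → EU) (XG : Ω → EG)
    (hXj : Measurable Xj) (hXtil : Measurable Xtil)
    (hXU : Measurable XU) (hXG : Measurable XG)
    -- (i) the conditional distribution of `X̃` given `X_G` equals that of `X_j` given `X_G`
    (hrep : ∀ᵐ g ∂(μ.map XG), condDistrib Xtil XG μ g = condDistrib Xj XG μ g)
    -- (ii) `X̃` is conditionally independent of `X_U` given `X_G`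
    (hci : CondIndepFun (MeasurableSpace.comap XG inferInstance) hXG.comap_le Xtil XU μ) :
    μ.map (fun ω => ((XG ω, XU ω), Xtil ω))
      = (μ.map (fun ω => (XG ω, XU ω))) ⊗ₘ ((condDistrib Xj XG μ).prodMkRight EU) :=
  rfi_interventional_factorization_general hXtil hXU hXG hrep hci
end

section
/- Let X̃ be a replacement variable for X_j relative to G. If X_j is conditionally independent of the pair (X_U, Y) given X_G, then the law of (Y, X_j, X_U, X_G) under μ equals the law of (Y, X̃, X_U, X_G) under μ; that is, the observational and interventional joint distributions coincide. -/
open MeasureTheory ProbabilityTheory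
open scoped ProbabilityTheory

/-! Under conditional independence given `X_G`, the conditional probability of the event
`{X ∈ t} ∩ {(X_U, Y) ∈ u}` factors as `P(X ∈ t | X_G) * P((X_U, Y) ∈ u | X_G)`. The first factor is
the same for `X = X_j` and `X = X̃`, and the second does not involve `X`; integrating over
`{X_G ∈ s}` shows that the two joint laws agree on all boxes `s ×ˢ t ×ˢ u`. -/

section

variable {Ω β γ δ : Type*} {m mΩ : MeasurableSpace Ω} [MeasurableSpace β] [MeasurableSpace δ]
  {μ : Measure Ω} [IsFiniteMeasure μ]

lemma measure_inter_eq_of_condExp_ae_eq {s A B : Set Ω} (hm : m ≤ mΩ) (hs : MeasurableSet[m] s)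
    (hA : MeasurableSet A) (hB : MeasurableSet B) (hAB : μ⟦A | m⟧ =ᵐ[μ] μ⟦B | m⟧) :
    μ (s ∩ A) = μ (s ∩ B) := by
  have setIntegral_condExp_eq {C : Set Ω} (hC : MeasurableSet C) :
      ∫ ω in s, (μ⟦C | m⟧) ω ∂μ = μ.real (s ∩ C) := by
    rw [setIntegral_condExp hm ((integrable_const 1).indicator hC) hs,
      setIntegral_indicator hC, setIntegral_one_eq_measureReal]
  rw [← measureReal_eq_measureReal_iff, ← setIntegral_condExp_eq hA, ← setIntegral_condExp_eq hB]
  exact integral_congr_ae (ae_restrict_of_ae hAB)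

lemma condExp_preimage_ae_eq_of_condDistrib_ae_eq [StandardBorelSpace β] [Nonempty β]
    [mγ : MeasurableSpace γ] {f f' : Ω → β} {k : Ω → γ} (hf : Measurable f) (hf' : Measurable f')
    (hk : Measurable k) (h : condDistrib f k μ =ᵐ[μ.map k] condDistrib f' k μ)
    {t : Set β} (ht : MeasurableSet t) :
    μ⟦f ⁻¹' t | mγ.comap k⟧ =ᵐ[μ] μ⟦f' ⁻¹' t | mγ.comap k⟧ := by
  filter_upwards [ae_of_ae_map hk.aemeasurable h, condDistrib_ae_eq_condExp hk hf ht,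
    condDistrib_ae_eq_condExp hk hf' ht] with ω h_eq hω hω'
  rw [← hω, ← hω', h_eq]

variable [StandardBorelSpace Ω] {f f' : Ω → β} {g : Ω → δ} {hm : m ≤ mΩ}

lemma condExp_inter_preimage_ae_eq_of_condIndepFun
    (hf : Measurable f) (hf' : Measurable f') (hg : Measurable g)
    (hfg : CondIndepFun m hm f g μ) (hfg' : CondIndepFun m hm f' g μ)
    {t : Set β} {u : Set δ} (ht : MeasurableSet t) (hu : MeasurableSet u)
    (h : μ⟦f ⁻¹' t | m⟧ =ᵐ[μ] μ⟦f' ⁻¹' t | m⟧) :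
    μ⟦f ⁻¹' t ∩ g ⁻¹' u | m⟧ =ᵐ[μ] μ⟦f' ⁻¹' t ∩ g ⁻¹' u | m⟧ := by
  filter_upwards [(condIndepFun_iff_condExp_inter_preimage_eq_mul hf hg).1 hfg t u ht hu,
    (condIndepFun_iff_condExp_inter_preimage_eq_mul hf' hg).1 hfg' t u ht hu, h]
    with ω h_mul h_mul' h_eq
  rw [h_mul, h_mul', h_eq]

lemma identDistrib_prodMk_of_condIndepFun [MeasurableSpace γ] {k : Ω → γ}
    (hf : Measurable f) (hf' : Measurable f') (hg : Measurable g) (hk : Measurable[m] k)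
    (hfg : CondIndepFun m hm f g μ) (hfg' : CondIndepFun m hm f' g μ)
    (h : ∀ t, MeasurableSet t → μ⟦f ⁻¹' t | m⟧ =ᵐ[μ] μ⟦f' ⁻¹' t | m⟧) :
    IdentDistrib (fun ω ↦ (k ω, f ω, g ω)) (fun ω ↦ (k ω, f' ω, g ω)) μ μ where
  aemeasurable_fst := ((hk.mono hm le_rfl).prodMk (hf.prodMk hg)).aemeasurable
  aemeasurable_snd := ((hk.mono hm le_rfl).prodMk (hf'.prodMk hg)).aemeasurable
  map_eq := by
    have hk' : Measurable k := hk.mono hm le_rfl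
    refine Measure.ext_prod₃ fun {s t u} hs ht hu ↦ ?_
    rw [Measure.map_apply (by fun_prop) (hs.prod (ht.prod hu)),
      Measure.map_apply (by fun_prop) (hs.prod (ht.prod hu))]
    exact measure_inter_eq_of_condExp_ae_eq hm (hk hs) ((hf ht).inter (hg hu))
      ((hf' ht).inter (hg hu))
      (condExp_inter_preimage_ae_eq_of_condIndepFun hf hf' hg hfg hfg' ht hu (h t ht))

end

theorem rfi_lemma1_distributional_general
    {Ω Ej EU EG EY : Type*}
    [MeasurableSpace Ω] [StandardBorelSpace Ω]
    [MeasurableSpace Ej] [StandardBorelSpace Ej] [Nonempty Ej]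
    [MeasurableSpace EU] [MeasurableSpace EG] [MeasurableSpace EY]
    (μ : Measure Ω) [IsFiniteMeasure μ]
    (Xj Xtil : Ω → Ej) (XU : Ω → EU) (XG : Ω → EG) (Y : Ω → EY)
    (hXj : Measurable Xj) (hXtil : Measurable Xtil)
    (hXU : Measurable XU) (hXG : Measurable XG) (hY : Measurable Y)
    (hrep : ∀ᵐ g ∂(μ.map XG), condDistrib Xtil XG μ g = condDistrib Xj XG μ g)
    (hci : CondIndepFun (MeasurableSpace.comap XG inferInstance) hXG.comap_le Xtil
      (fun ω => (XU ω, Y ω)) μ)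
    (hciXj : CondIndepFun (MeasurableSpace.comap XG inferInstance) hXG.comap_le Xj
      (fun ω => (XU ω, Y ω)) μ) :
    μ.map (fun ω => (Y ω, Xj ω, XU ω, XG ω)) = μ.map (fun ω => (Y ω, Xtil ω, XU ω, XG ω)) := by
  have joint_identDistrib :
      IdentDistrib (fun ω ↦ (XG ω, Xj ω, XU ω, Y ω)) (fun ω ↦ (XG ω, Xtil ω, XU ω, Y ω)) μ μ :=
    identDistrib_prodMk_of_condIndepFun hXj hXtil (hXU.prodMk hY) (comap_measurable XG) hciXj hci
      fun _ ht ↦ (condExp_preimage_ae_eq_of_condDistrib_ae_eq hXtil hXj hXG hrep ht).symm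
  have measurable_reorder :
      Measurable fun p : EG × Ej × EU × EY ↦ (p.2.2.2, p.2.1, p.2.2.1, p.1) := by
    fun_prop
  exact (joint_identDistrib.comp measurable_reorder).map_eq

/-- Distributional core of **Lemma 1**: if `X_j ⫫ (X_U, Y) | X_G`, then the observational and
interventional joint distributions coincide. -/
theorem rfi_lemma1_distributional
    {Ω Ej EU EG EY : Type*}
    [MeasurableSpace Ω] [StandardBorelSpace Ω] [Nonempty Ω]
    [MeasurableSpace Ej] [StandardBorelSpace Ej] [Nonempty Ej]
    [MeasurableSpace EU] [StandardBorelSpace EU] [Nonempty EU]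
    [MeasurableSpace EG] [StandardBorelSpace EG] [Nonempty EG]
    [MeasurableSpace EY] [StandardBorelSpace EY] [Nonempty EY]
    (μ : Measure Ω) [IsProbabilityMeasure μ]
    (Xj Xtil : Ω → Ej) (XU : Ω → EU) (XG : Ω → EG) (Y : Ω → EY)
    (hXj : Measurable Xj) (hXtil : Measurable Xtil)
    (hXU : Measurable XU) (hXG : Measurable XG) (hY : Measurable Y)
    -- (i) the conditional distribution of `X̃` given `X_G` equals that of `X_j` given `X_G`
    (hrep : ∀ᵐ g ∂(μ.map XG), condDistrib Xtil XG μ g = condDistrib Xj XG μ g)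
    -- (ii) `X̃` is conditionally independent of `(X_U, Y)` given `X_G`
    (hci : CondIndepFun (MeasurableSpace.comap XG inferInstance) hXG.comap_le Xtil
      (fun ω => (XU ω, Y ω)) μ)
    -- `X_j` is conditionally independent of `(X_U, Y)` given `X_G`
    (hciXj : CondIndepFun (MeasurableSpace.comap XG inferInstance) hXG.comap_le Xj
      (fun ω => (XU ω, Y ω)) μ) :
    μ.map (fun ω => (Y ω, Xj ω, XU ω, XG ω)) = μ.map (fun ω => (Y ω, Xtil ω, XU ω, XG ω)) :=
  rfi_lemma1_distributional_general μ Xj Xtil XU XG Y hXj hXtil hXU hXG hY hrep hci hciXj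
end

section
/- Let X̃ be a replacement variable for X_j relative to G. If X_j is conditionally independent of the pair (X_U, Y) given X_G, then the relative feature importance vanishes: RFI_j^G = 0, i.e. the perturbed risk R̃ equals the original risk R. -/
open MeasureTheory ProbabilityTheory
open scoped ProbabilityTheory

/-!
If `X` is conditionally independent of `W` given `Z`, then the joint law of `((Z, W), X)` is
obtained by drawing `(Z, W)` and then drawing `X` from its conditional law given `Z` alone. With
`W = (X_U, Y)`, this applies both to `X_j` and to its replacement `X̃`, whose conditional laws given
`X_G` agree. Hence `((X_G, X_U, Y), X_j)` and `((X_G, X_U, Y), X̃)` have the same law, and so do the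
two losses.
-/

section CondIndepFun

variable {Ω Ω' α β γ : Type*} [MeasurableSpace Ω] [StandardBorelSpace Ω]
  [MeasurableSpace Ω'] [StandardBorelSpace Ω'] [MeasurableSpace α]
  [MeasurableSpace β] [StandardBorelSpace β] [Nonempty β]
  [MeasurableSpace γ] [StandardBorelSpace γ] [Nonempty γ]
  {μ : Measure Ω} [IsFiniteMeasure μ] {ν : Measure Ω'} [IsFiniteMeasure ν]
  {Z : Ω → α} {W : Ω → β} {X : Ω → γ} {Z' : Ω' → α} {W' : Ω' → β} {X' : Ω' → γ}

lemma map_prodMk_eq_compProd_condDistrib_of_condIndepFun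
    (hZ : Measurable Z) (hW : Measurable W) (hX : Measurable X) (hXW : X ⟂ᵢ[Z, hZ; μ] W) :
    μ.map (fun ω ↦ ((Z ω, W ω), X ω)) =
      μ.map (fun ω ↦ (Z ω, W ω)) ⊗ₘ (condDistrib X Z μ).prodMkRight β :=
  (condDistrib_ae_eq_iff_measure_eq_compProd _ hX.aemeasurable _).1
    ((condIndepFun_iff_condDistrib_prod_ae_eq_prodMkRight hX hW hZ).1 hXW.symm)

lemma identDistrib_prodMk_of_condIndepFun_s3
    (hZ : Measurable Z) (hW : Measurable W) (hX : Measurable X)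
    (hZ' : Measurable Z') (hW' : Measurable W') (hX' : Measurable X')
    (hXW : X ⟂ᵢ[Z, hZ; μ] W) (hXW' : X' ⟂ᵢ[Z', hZ'; ν] W')
    (hZW : IdentDistrib (fun ω ↦ (Z ω, W ω)) (fun ω ↦ (Z' ω, W' ω)) μ ν)
    (hcond : condDistrib X Z μ =ᵐ[μ.map Z] condDistrib X' Z' ν) :
    IdentDistrib (fun ω ↦ ((Z ω, W ω), X ω)) (fun ω ↦ ((Z' ω, W' ω), X' ω)) μ ν where
  aemeasurable_fst := by fun_prop
  aemeasurable_snd := by fun_prop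
  map_eq := by
    have hcond_prod : (condDistrib X Z μ).prodMkRight β =ᵐ[μ.map (fun ω ↦ (Z ω, W ω))]
        (condDistrib X' Z' ν).prodMkRight β := by
      rw [← Measure.fst_map_prodMk hW] at hcond
      exact ae_of_ae_map measurable_fst.aemeasurable hcond
    calc μ.map (fun ω ↦ ((Z ω, W ω), X ω))
      _ = μ.map (fun ω ↦ (Z ω, W ω)) ⊗ₘ (condDistrib X Z μ).prodMkRight β :=
        map_prodMk_eq_compProd_condDistrib_of_condIndepFun hZ hW hX hXW
      _ = μ.map (fun ω ↦ (Z ω, W ω)) ⊗ₘ (condDistrib X' Z' ν).prodMkRight β :=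
        Measure.compProd_congr hcond_prod
      _ = ν.map (fun ω ↦ (Z' ω, W' ω)) ⊗ₘ (condDistrib X' Z' ν).prodMkRight β := by
        rw [hZW.map_eq]
      _ = ν.map (fun ω ↦ ((Z' ω, W' ω), X' ω)) :=
        (map_prodMk_eq_compProd_condDistrib_of_condIndepFun hZ' hW' hX' hXW').symm

end CondIndepFun

theorem rfi_lemma1_general
    {Ω Ej EU EG EY EYh EL : Type*}
    [MeasurableSpace Ω] [StandardBorelSpace Ω]
    [MeasurableSpace Ej] [StandardBorelSpace Ej] [Nonempty Ej]
    [MeasurableSpace EU] [StandardBorelSpace EU] [Nonempty EU]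
    [MeasurableSpace EG]
    [MeasurableSpace EY] [StandardBorelSpace EY] [Nonempty EY]
    [MeasurableSpace EYh] [MeasurableSpace EL]
    {μ : Measure Ω} [IsFiniteMeasure μ]
    {Xj Xtil : Ω → Ej} {XU : Ω → EU} {XG : Ω → EG} {Y : Ω → EY}
    (hXj : Measurable Xj) (hXtil : Measurable Xtil)
    (hXU : Measurable XU) (hXG : Measurable XG) (hY : Measurable Y)
    {f : Ej × EU × EG → EYh} (hf : Measurable f)
    {L : EY × EYh → EL} (hL : Measurable L)
    (hrep : condDistrib Xtil XG μ =ᵐ[μ.map XG] condDistrib Xj XG μ)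
    (hci : Xtil ⟂ᵢ[XG, hXG; μ] fun ω ↦ (XU ω, Y ω))
    (hciXj : Xj ⟂ᵢ[XG, hXG; μ] fun ω ↦ (XU ω, Y ω)) :
    IdentDistrib (fun ω ↦ L (Y ω, f (Xtil ω, XU ω, XG ω)))
      (fun ω ↦ L (Y ω, f (Xj ω, XU ω, XG ω))) μ μ := by
  have hW : Measurable fun ω ↦ (XU ω, Y ω) := hXU.prodMk hY
  have hjoint : IdentDistrib (fun ω ↦ ((XG ω, XU ω, Y ω), Xtil ω))
      (fun ω ↦ ((XG ω, XU ω, Y ω), Xj ω)) μ μ :=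
    identDistrib_prodMk_of_condIndepFun_s3 hXG hW hXtil hXG hW hXj hci hciXj
      (.refl (hXG.prodMk hW).aemeasurable) hrep
  have hloss : Measurable fun p : (EG × EU × EY) × Ej ↦ L (p.1.2.2, f (p.2, p.1.2.1, p.1.1)) := by
    fun_prop
  exact hjoint.comp hloss

/-- **Lemma 1**: if `X_j ⫫ (X_U, Y) | X_G`, then the relative feature importance vanishes,
i.e. the perturbed risk equals the original risk. -/
theorem rfi_lemma1
    {Ω Ej EU EG EY EYh : Type*}
    [MeasurableSpace Ω] [StandardBorelSpace Ω] [Nonempty Ω]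
    [MeasurableSpace Ej] [StandardBorelSpace Ej] [Nonempty Ej]
    [MeasurableSpace EU] [StandardBorelSpace EU] [Nonempty EU]
    [MeasurableSpace EG] [StandardBorelSpace EG] [Nonempty EG]
    [MeasurableSpace EY] [StandardBorelSpace EY] [Nonempty EY]
    [MeasurableSpace EYh]
    (μ : Measure Ω) [IsProbabilityMeasure μ]
    (Xj Xtil : Ω → Ej) (XU : Ω → EU) (XG : Ω → EG) (Y : Ω → EY)
    (hXj : Measurable Xj) (hXtil : Measurable Xtil)
    (hXU : Measurable XU) (hXG : Measurable XG) (hY : Measurable Y)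
    (f : Ej × EU × EG → EYh) (hf : Measurable f)
    (L : EY × EYh → ℝ) (hL : Measurable L)
    (hint : Integrable (fun ω => L (Y ω, f (Xj ω, XU ω, XG ω))) μ)
    (hint' : Integrable (fun ω => L (Y ω, f (Xtil ω, XU ω, XG ω))) μ)
    -- (i) the conditional distribution of `X̃` given `X_G` equals that of `X_j` given `X_G`
    (hrep : ∀ᵐ g ∂(μ.map XG), condDistrib Xtil XG μ g = condDistrib Xj XG μ g)
    -- (ii) `X̃` is conditionally independent of `(X_U, Y)` given `X_G`
    (hci : CondIndepFun (MeasurableSpace.comap XG inferInstance) hXG.comap_le Xtil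
      (fun ω => (XU ω, Y ω)) μ)
    -- `X_j` is conditionally independent of `(X_U, Y)` given `X_G`
    (hciXj : CondIndepFun (MeasurableSpace.comap XG inferInstance) hXG.comap_le Xj
      (fun ω => (XU ω, Y ω)) μ) :
    (∫ ω, L (Y ω, f (Xtil ω, XU ω, XG ω)) ∂μ) - (∫ ω, L (Y ω, f (Xj ω, XU ω, XG ω)) ∂μ) = 0 :=
  sub_eq_zero.2
    (rfi_lemma1_general hXj hXtil hXU hXG hY hf hL hrep hci hciXj).integral_eq
end

section
/- Let W : Ω → ℝ be an integrable random variable that is measurable with respect to the σ-algebra generated jointly by random variables A : Ω → E_A and B : Ω → E_B (i.e. W = h(A, B) for some measurable h). If W is conditionally independent of A given the σ-algebra generated by B, then W equals its conditional expectation given σ(B) almost surely: W = μ[W | σ(B)] μ-a.e. In particular, W is almost surely equal to a σ(B)-measurable function. -/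
open MeasureTheory ProbabilityTheory
open scoped ProbabilityTheory

/-!
Suppose that `m₁` and `m₂` are conditionally independent given `m ≤ m₂`. For `t ∈ m₂` this gives
`μ[μ⟦t | m⟧ | m₁] = μ⟦t | m₁⟧`, so for `f` measurable with respect to `m₁`
`∫_t μ[f | m] = ∫ μ⟦t | m⟧ f = ∫ μ⟦t | m₁⟧ f = ∫_t f`,
which says that `μ[f | m₂] = μ[f | m]`. Conditional independence of `σ(W)` and `σ(A)` given `m`
persists when `σ(A)` is enlarged to `σ(A) ⊔ m`. As `W` is measurable with respect to the latter,
`W = μ[W | σ(A) ⊔ m] = μ[W | m]`.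
-/

section PiSystem

variable {Ω : Type*} (m₁ m₂ : MeasurableSpace Ω)

theorem isPiSystem_image2_inter_measurableSet :
    IsPiSystem (Set.image2 (· ∩ ·) {s | MeasurableSet[m₁] s} {t | MeasurableSet[m₂] t}) := by
  rintro _ ⟨s, hs, t, ht, rfl⟩ _ ⟨s', hs', t', ht', rfl⟩ -
  exact ⟨s ∩ s', hs.inter hs', t ∩ t', ht.inter ht', Set.inter_inter_inter_comm s s' t t'⟩

theorem generateFrom_image2_inter_measurableSet :
    MeasurableSpace.generateFrom
      (Set.image2 (· ∩ ·) {s | MeasurableSet[m₁] s} {t | MeasurableSet[m₂] t}) = m₁ ⊔ m₂ := by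
  refine le_antisymm (MeasurableSpace.generateFrom_le ?_) (sup_le (fun s hs ↦ ?_) fun t ht ↦ ?_)
  · rintro _ ⟨s, hs, t, ht, rfl⟩
    have hs_sup : MeasurableSet[m₁ ⊔ m₂] s := le_sup_left (b := m₂) s hs
    exact hs_sup.inter (le_sup_right (a := m₁) t ht)
  · exact MeasurableSpace.measurableSet_generateFrom ⟨s, hs, Set.univ, .univ, Set.inter_univ s⟩
  · exact MeasurableSpace.measurableSet_generateFrom ⟨Set.univ, .univ, t, ht, Set.univ_inter t⟩

end PiSystem

section CondExp

variable {Ω E : Type*} [NormedAddCommGroup E] [NormedSpace ℝ E]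
  {m mΩ : MeasurableSpace Ω} {μ : Measure Ω} {f : Ω → E} {s t : Set Ω}

theorem condExp_indicator_inter_of_measurableSet [IsFiniteMeasure μ] (hs : MeasurableSet s)
    (ht : MeasurableSet[m] t) : μ⟦s ∩ t | m⟧ =ᵐ[μ] t.indicator (μ⟦s | m⟧) := by
  rw [Set.inter_comm, ← Set.indicator_indicator]
  exact condExp_indicator ((integrable_const 1).indicator hs) ht

theorem integrable_condExp_indicator_smul [IsFiniteMeasure μ] (hf : Integrable f μ) (t : Set Ω) :
    Integrable (μ⟦t | m⟧ • f) μ := by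
  have norm_indicator_le_one (ω : Ω) : ‖t.indicator (fun _ ↦ (1 : ℝ)) ω‖ ≤ 1 :=
    (norm_indicator_le_norm_self _ ω).trans_eq norm_one
  exact hf.bdd_smul 1 integrable_condExp.aestronglyMeasurable
    (ae_bdd_norm_condExp_of_ae_bdd_norm (ae_of_all μ norm_indicator_le_one))

variable [CompleteSpace E]

theorem integral_smul_condExp (hm : m ≤ mΩ) [SigmaFinite (μ.trim hm)] {g : Ω → ℝ}
    (hg : AEStronglyMeasurable[m] g μ) (hgf : Integrable (g • f) μ) (hf : Integrable f μ) :
    ∫ ω, (g • μ[f | m]) ω ∂μ = ∫ ω, (g • f) ω ∂μ := by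
  rw [← integral_condExp hm (f := g • f)]
  exact integral_congr_ae (condExp_smul_of_aestronglyMeasurable_left hg hgf hf).symm

theorem integral_condExp_smul (hm : m ≤ mΩ) [SigmaFinite (μ.trim hm)] {g : Ω → ℝ}
    (hg : Integrable g μ) (hgf : Integrable (g • f) μ) (hf : AEStronglyMeasurable[m] f μ) :
    ∫ ω, (μ[g | m] • f) ω ∂μ = ∫ ω, (g • f) ω ∂μ := by
  rw [← integral_condExp hm (f := g • f)]
  exact integral_congr_ae (condExp_smul_of_aestronglyMeasurable_right hg hgf hf).symm

theorem integral_condExp_indicator_smul [IsFiniteMeasure μ] (hm : m ≤ mΩ) (hf : Integrable f μ)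
    (hfm : AEStronglyMeasurable[m] f μ) (ht : MeasurableSet t) :
    ∫ ω, (μ⟦t | m⟧ • f) ω ∂μ = ∫ ω in t, f ω ∂μ := by
  have h_smul : (t.indicator fun _ ↦ (1 : ℝ)) • f = t.indicator f := by
    refine (Set.indicator_smul_left t (fun _ ↦ (1 : ℝ)) f).symm.trans ?_
    simp only [one_smul]
  have h_int : Integrable ((t.indicator fun _ ↦ (1 : ℝ)) • f) μ := h_smul ▸ hf.indicator ht
  rw [integral_condExp_smul hm ((integrable_const 1).indicator ht) h_int hfm, h_smul,
    integral_indicator ht]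

theorem integral_condExp_indicator_smul_condExp [IsFiniteMeasure μ] (hm : m ≤ mΩ) (f : Ω → E)
    (ht : MeasurableSet t) :
    ∫ ω, (μ⟦t | m⟧ • μ[f | m]) ω ∂μ = ∫ ω in t, (μ[f | m]) ω ∂μ :=
  integral_condExp_indicator_smul hm integrable_condExp
    stronglyMeasurable_condExp.aestronglyMeasurable ht

theorem setIntegral_condExp_eq_integral_condExp_indicator_smul [IsFiniteMeasure μ] (hm : m ≤ mΩ)
    (hf : Integrable f μ) (ht : MeasurableSet t) :
    ∫ ω in t, (μ[f | m]) ω ∂μ = ∫ ω, (μ⟦t | m⟧ • f) ω ∂μ := by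
  rw [← integral_condExp_indicator_smul_condExp hm f ht]
  exact integral_smul_condExp hm stronglyMeasurable_condExp.aestronglyMeasurable
    (integrable_condExp_indicator_smul hf t) hf

end CondExp

section CondIndep

variable {Ω : Type*} {m m₁ m₂ mΩ : MeasurableSpace Ω} [StandardBorelSpace Ω]
  {μ : Measure Ω} [IsFiniteMeasure μ] {hm : m ≤ mΩ}

theorem condIndep_sup_right_self (hm₁ : m₁ ≤ mΩ) (hm₂ : m₂ ≤ mΩ)
    (h : CondIndep m m₁ m₂ hm μ) : CondIndep m m₁ (m₂ ⊔ m) hm μ := by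
  refine CondIndepSets.condIndep hm₁ (sup_le hm₂ hm)
    (@MeasurableSpace.isPiSystem_measurableSet Ω m₁) (isPiSystem_image2_inter_measurableSet m₂ m)
    (@MeasurableSpace.generateFrom_measurableSet Ω m₁).symm
    (generateFrom_image2_inter_measurableSet m₂ m).symm ?_
  rw [condIndepSets_iff m hm]
  · rintro s _ hs ⟨t, ht, u, hu, rfl⟩
    have h_prod : μ⟦s ∩ t | m⟧ =ᵐ[μ] μ⟦s | m⟧ * μ⟦t | m⟧ :=
      (condIndep_iff m m₁ m₂ hm hm₁ hm₂ μ).1 h s t hs ht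
    calc μ⟦s ∩ (t ∩ u) | m⟧
      _ =ᵐ[μ] u.indicator (μ⟦s ∩ t | m⟧) := by
        rw [← Set.inter_assoc]
        exact condExp_indicator_inter_of_measurableSet ((hm₁ s hs).inter (hm₂ t ht)) hu
      _ =ᵐ[μ] u.indicator (μ⟦s | m⟧ * μ⟦t | m⟧) := h_prod.indicator
      _ = μ⟦s | m⟧ * u.indicator (μ⟦t | m⟧) := by
        ext ω
        exact Set.indicator_mul_right u (μ⟦s | m⟧) (μ⟦t | m⟧)
      _ =ᵐ[μ] μ⟦s | m⟧ * μ⟦t ∩ u | m⟧ :=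
        .mul .rfl (condExp_indicator_inter_of_measurableSet (hm₂ t ht) hu).symm
  · exact hm₁
  · rintro _ ⟨t, ht, u, hu, rfl⟩
    exact (hm₂ t ht).inter (hm u hu)

theorem setIntegral_condExp_indicator_of_condIndep (hm₁ : m₁ ≤ mΩ) (hm₂ : m₂ ≤ mΩ)
    (h : CondIndep m m₁ m₂ hm μ) {s t : Set Ω} (hs : MeasurableSet[m₁] s)
    (ht : MeasurableSet[m₂] t) :
    ∫ ω in s, (μ⟦t | m⟧) ω ∂μ = ∫ ω in s, t.indicator (fun _ ↦ (1 : ℝ)) ω ∂μ := by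
  have h_prod : μ⟦s ∩ t | m⟧ =ᵐ[μ] μ⟦s | m⟧ * μ⟦t | m⟧ :=
    (condIndep_iff m m₁ m₂ hm hm₁ hm₂ μ).1 h s t hs ht
  calc ∫ ω in s, (μ⟦t | m⟧) ω ∂μ
    _ = ∫ ω, (μ⟦s | m⟧ * μ⟦t | m⟧) ω ∂μ :=
      (integral_condExp_indicator_smul_condExp hm _ (hm₁ s hs)).symm
    _ = ∫ ω, (μ⟦s ∩ t | m⟧) ω ∂μ := integral_congr_ae h_prod.symm
    _ = ∫ ω, (s ∩ t).indicator (fun _ ↦ (1 : ℝ)) ω ∂μ := integral_condExp hm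
    _ = ∫ ω in s, t.indicator (fun _ ↦ (1 : ℝ)) ω ∂μ := by
      rw [← Set.indicator_indicator, integral_indicator (hm₁ s hs)]

theorem condExp_condExp_indicator_of_condIndep (hm₁ : m₁ ≤ mΩ) (hm₂ : m₂ ≤ mΩ)
    (h : CondIndep m m₁ m₂ hm μ) {t : Set Ω} (ht : MeasurableSet[m₂] t) :
    μ[μ⟦t | m⟧ | m₁] =ᵐ[μ] μ⟦t | m₁⟧ := by
  refine ae_eq_condExp_of_forall_setIntegral_eq hm₁ ((integrable_const 1).indicator (hm₂ t ht))
    (fun _ _ _ ↦ integrable_condExp.integrableOn) (fun s hs _ ↦ ?_)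
    stronglyMeasurable_condExp.aestronglyMeasurable
  rw [setIntegral_condExp hm₁ integrable_condExp hs]
  exact setIntegral_condExp_indicator_of_condIndep hm₁ hm₂ h hs ht

variable {E : Type*} [NormedAddCommGroup E] [NormedSpace ℝ E] [CompleteSpace E]

theorem setIntegral_condExp_of_condIndep (hm₁ : m₁ ≤ mΩ) (hm₂ : m₂ ≤ mΩ)
    (h : CondIndep m m₁ m₂ hm μ) {f : Ω → E} (hf : Integrable f μ)
    (hfm : AEStronglyMeasurable[m₁] f μ) {t : Set Ω} (ht : MeasurableSet[m₂] t) :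
    ∫ ω in t, (μ[f | m]) ω ∂μ = ∫ ω in t, f ω ∂μ := by
  have h_tower : μ[μ⟦t | m⟧ | m₁] • f =ᵐ[μ] μ⟦t | m₁⟧ • f :=
    (condExp_condExp_indicator_of_condIndep hm₁ hm₂ h ht).smul .rfl
  calc ∫ ω in t, (μ[f | m]) ω ∂μ
    _ = ∫ ω, (μ⟦t | m⟧ • f) ω ∂μ :=
      setIntegral_condExp_eq_integral_condExp_indicator_smul hm hf (hm₂ t ht)
    _ = ∫ ω, (μ[μ⟦t | m⟧ | m₁] • f) ω ∂μ :=
      (integral_condExp_smul hm₁ integrable_condExp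
        (integrable_condExp_indicator_smul hf t) hfm).symm
    _ = ∫ ω, (μ⟦t | m₁⟧ • f) ω ∂μ := integral_congr_ae h_tower
    _ = ∫ ω in t, f ω ∂μ := integral_condExp_indicator_smul hm₁ hf hfm (hm₂ t ht)

theorem condExp_eq_condExp_of_condIndep (hm₁ : m₁ ≤ mΩ) (hm₂ : m₂ ≤ mΩ) (hmm₂ : m ≤ m₂)
    (h : CondIndep m m₁ m₂ hm μ) {f : Ω → E} (hf : Integrable f μ)
    (hfm : AEStronglyMeasurable[m₁] f μ) : μ[f | m₂] =ᵐ[μ] μ[f | m] :=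
  (ae_eq_condExp_of_forall_setIntegral_eq hm₂ hf (fun _ _ _ ↦ integrable_condExp.integrableOn)
    (fun _ ht _ ↦ setIntegral_condExp_of_condIndep hm₁ hm₂ h hf hfm ht)
    (stronglyMeasurable_condExp.mono hmm₂).aestronglyMeasurable).symm

theorem rfi_lemma2_key_step_general [MeasurableSpace E] [BorelSpace E] {α : Type*}
    [MeasurableSpace α] {A : Ω → α} {W : Ω → E} (hA : Measurable A) (hWint : Integrable W μ)
    (hWmeas : StronglyMeasurable[MeasurableSpace.comap A inferInstance ⊔ m] W)
    (hci : CondIndepFun m hm W A μ) :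
    W =ᵐ[μ] μ[W | m] := by
  have hAm : MeasurableSpace.comap A inferInstance ⊔ m ≤ mΩ := sup_le hA.comap_le hm
  have hW : MeasurableSpace.comap W inferInstance ≤ mΩ :=
    (hWmeas.measurable.mono hAm le_rfl).comap_le
  have hWW : StronglyMeasurable[MeasurableSpace.comap W inferInstance] W :=
    stronglyMeasurable_iff_measurable_separable.2
      ⟨comap_measurable W, hWmeas.isSeparable_range⟩
  have h_indep : CondIndep m (MeasurableSpace.comap W inferInstance)
      (MeasurableSpace.comap A inferInstance ⊔ m) hm μ :=
    condIndep_sup_right_self hW hA.comap_le ((condIndepFun_iff_condIndep m hm W A μ).1 hci)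
  calc W
    _ = μ[W | MeasurableSpace.comap A inferInstance ⊔ m] :=
      (condExp_of_stronglyMeasurable hAm hWmeas hWint).symm
    _ =ᵐ[μ] μ[W | m] :=
      condExp_eq_condExp_of_condIndep hW hAm le_sup_right h_indep hWint hWW.aestronglyMeasurable

end CondIndep

/-- Key abstract step of **Lemma 2**: an integrable random variable `W = h(A, B)` that is
conditionally independent of `A` given `σ(B)` equals its conditional expectation given `σ(B)`
almost surely; in particular, it is a.s. a function of `B` alone. -/
theorem rfi_lemma2_key_step
    {Ω EA EB : Type*}
    [MeasurableSpace Ω] [StandardBorelSpace Ω] [Nonempty Ω]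
    [MeasurableSpace EA] [StandardBorelSpace EA] [Nonempty EA]
    [MeasurableSpace EB] [StandardBorelSpace EB] [Nonempty EB]
    (μ : Measure Ω) [IsProbabilityMeasure μ]
    (A : Ω → EA) (B : Ω → EB) (W : Ω → ℝ)
    (hA : Measurable A) (hB : Measurable B)
    (hWint : Integrable W μ)
    -- `W` is measurable w.r.t. the σ-algebra generated jointly by `A` and `B`,
    -- i.e. `W = h(A, B)` for some measurable `h`
    (hWmeas : ∃ h : EA × EB → ℝ, Measurable h ∧ W = fun ω => h (A ω, B ω))
    -- `W` is conditionally independent of `A` given `σ(B)`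
    (hci : CondIndepFun (MeasurableSpace.comap B inferInstance) hB.comap_le W A μ) :
    W =ᵐ[μ] μ[W | MeasurableSpace.comap B inferInstance] := by
  obtain ⟨h, hh, rfl⟩ := hWmeas
  exact rfi_lemma2_key_step_general hA hWint
    (hh.comp (MeasurableSpace.comap_prodMk A B ▸ comap_measurable _)).stronglyMeasurable hci
end

section
/- Let X̃ be a replacement variable for X_j relative to G, and write Ŷ_rep = f(X̃, X_U, X_G) for the prediction on the perturbed input. Assume the law of (X_j, X_U, X_G) under μ is absolutely continuous with respect to the law of (X̃, X_U, X_G) under μ (every observationally possible feature value is interventionally possible). If X̃ is conditionally independent of Ŷ_rep given (X_U, X_G) under μ, then RFI_j^G = 0. -/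
open MeasureTheory ProbabilityTheory
open scoped ProbabilityTheory

/-!
Write `W = (X_U, X_G)`. The perturbed prediction `f (X̃, W)` is a function of `(X̃, W)`, so if it is
independent of `X̃` given `W`, it is independent of itself given `W`. By the conditional zero-one
law, every event `{f (X̃, W) ∈ B}` then has conditional probability `0` or `1` given `W`, hence
agrees almost surely with an event `{W ∈ S}`. By absolute continuity the same `S` describes
`{f (X_j, W) ∈ B}`, so the two predictions fall almost surely into the same measurable sets and
the two losses are almost surely equal.
-/

section ZeroOne

variable {Ω : Type*} {m mΩ : MeasurableSpace Ω} {μ : Measure Ω} [IsFiniteMeasure μ]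

theorem condExp_inter_ae_eq_indicator {s t : Set Ω} (hs : MeasurableSet s)
    (ht : MeasurableSet[m] t) : μ⟦s ∩ t | m⟧ =ᵐ[μ] t.indicator (μ⟦s | m⟧) := by
  rw [Set.inter_comm, ← Set.indicator_indicator]
  exact condExp_indicator ((integrable_const 1).indicator hs) ht

theorem measure_eq_of_condExp_ae_eq (hm : m ≤ mΩ) {s t : Set Ω} (hs : MeasurableSet s)
    (ht : MeasurableSet t) (h : μ⟦s | m⟧ =ᵐ[μ] μ⟦t | m⟧) : μ s = μ t := by
  refine (measureReal_eq_measureReal_iff (measure_ne_top μ s) (measure_ne_top μ t)).1 ?_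
  calc μ.real s = ∫ ω, s.indicator 1 ω ∂μ := (integral_indicator_one hs).symm
    _ = ∫ ω, (μ⟦s | m⟧) ω ∂μ := (integral_condExp hm).symm
    _ = ∫ ω, (μ⟦t | m⟧) ω ∂μ := integral_congr_ae h
    _ = ∫ ω, t.indicator 1 ω ∂μ := integral_condExp hm
    _ = μ.real t := integral_indicator_one ht

theorem ae_eq_setOf_condExp_eq_one (hm : m ≤ mΩ) {s : Set Ω} (hs : MeasurableSet s)
    (h : ∀ᵐ ω ∂μ, (μ⟦s | m⟧) ω = 0 ∨ (μ⟦s | m⟧) ω = 1) :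
    s =ᵐ[μ] {ω | (μ⟦s | m⟧) ω = 1} := by
  set t : Set Ω := {ω | (μ⟦s | m⟧) ω = 1}
  have ht : MeasurableSet[m] t :=
    stronglyMeasurable_condExp.measurable (measurableSet_singleton 1)
  have ht_condExp : μ⟦t | m⟧ = t.indicator fun _ => 1 :=
    condExp_of_stronglyMeasurable hm (stronglyMeasurable_const.indicator ht)
      ((integrable_const 1).indicator (hm t ht))
  have hst : μ⟦s | m⟧ =ᵐ[μ] μ⟦t | m⟧ := by
    rw [ht_condExp]
    filter_upwards [h] with ω hω
    by_cases hωt : ω ∈ t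
    · rw [Set.indicator_of_mem hωt, hωt]
    · rw [Set.indicator_of_notMem hωt, hω.resolve_right hωt]
  have hst_inter : μ⟦s ∩ t | m⟧ =ᵐ[μ] μ⟦t | m⟧ := by
    filter_upwards [condExp_inter_ae_eq_indicator hs ht, hst] with ω hω hωst
    by_cases hωt : ω ∈ t <;> simp [hω, hωst, ht_condExp, hωt]
  have hs_inter : MeasurableSet (s ∩ t) := hs.inter (hm t ht)
  have measure_inter : μ (s ∩ t) = μ t :=
    measure_eq_of_condExp_ae_eq hm hs_inter (hm t ht) hst_inter
  have measure_eq : μ s = μ t := measure_eq_of_condExp_ae_eq hm hs (hm t ht) hst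
  have hs_ae : (s ∩ t : Set Ω) =ᵐ[μ] s :=
    ae_eq_of_subset_of_measure_ge Set.inter_subset_left (measure_eq.trans measure_inter.symm).le
      hs_inter.nullMeasurableSet (measure_ne_top μ s)
  have ht_ae : (s ∩ t : Set Ω) =ᵐ[μ] t :=
    ae_eq_of_subset_of_measure_ge Set.inter_subset_right measure_inter.ge
      hs_inter.nullMeasurableSet (measure_ne_top μ t)
  exact hs_ae.symm.trans ht_ae

end ZeroOne

section CondIndep

variable {Ω α β γ : Type*} {m mΩ : MeasurableSpace Ω} [StandardBorelSpace Ω] {hm : m ≤ mΩ}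
  [MeasurableSpace α] [MeasurableSpace β] [MeasurableSpace γ]
  {μ : Measure Ω} [IsFiniteMeasure μ]

theorem condIndepFun_prodMk_left_of_measurable {X : Ω → α} {Z : Ω → β} {W : Ω → γ}
    (h : CondIndepFun m hm X Z μ) (hX : Measurable X) (hZ : Measurable Z) (hW : Measurable[m] W) :
    CondIndepFun m hm (fun ω => (X ω, W ω)) Z μ := by
  have hXW : Measurable fun ω => (X ω, W ω) := hX.prodMk (hW.mono hm le_rfl)
  rw [condIndepFun_iff_condIndep]
  refine CondIndepSets.condIndep hXW.comap_le hZ.comap_le (isPiSystem_prod.comap _)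
    (MeasurableSpace.isPiSystem_measurableSet.comap _)
    (by rw [← generateFrom_prod, MeasurableSpace.comap_generateFrom]; rfl)
    (MeasurableSpace.comap_eq_generateFrom _ _) ?_
  rw [condIndepSets_iff]
  · rintro _ _ ⟨_, ⟨s, hs, t, ht, rfl⟩, rfl⟩ ⟨u, hu, rfl⟩
    have hXZ := (condIndepFun_iff_condExp_inter_preimage_eq_mul hX hZ).1 h s u hs hu
    have hst := condExp_inter_ae_eq_indicator (μ := μ) (hX hs) (hW ht)
    have hsut := condExp_inter_ae_eq_indicator (μ := μ) ((hX hs).inter (hZ hu)) (hW ht)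
    rw [Set.mk_preimage_prod, Set.inter_right_comm]
    filter_upwards [hXZ, hst, hsut] with ω hω hωst hωsut
    rw [hωsut, Pi.mul_apply, hωst]
    by_cases hωt : ω ∈ W ⁻¹' t <;> simp [hωt, hω]
  · rintro _ ⟨_, ⟨s, hs, t, ht, rfl⟩, rfl⟩
    exact hXW (hs.prod ht)
  · rintro _ ⟨u, hu, rfl⟩
    exact hZ hu

theorem exists_preimage_ae_eq_of_condIndepFun_self {Z : Ω → β} {W : Ω → γ} (hZ : Measurable Z)
    (hW : Measurable W)
    (h : CondIndepFun (MeasurableSpace.comap W inferInstance) hW.comap_le Z Z μ)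
    {B : Set β} (hB : MeasurableSet B) :
    ∃ S, MeasurableSet S ∧ Z ⁻¹' B =ᵐ[μ] W ⁻¹' S := by
  have hBB := (condIndepFun_iff_condIndepSet_preimage hZ hZ).1 h B B hB hB
  have zero_or_one := condExp_eq_zero_or_one_of_condIndepSet_self hW.comap_le (hZ hB) hBB
  obtain ⟨S, hS, hWS⟩ : MeasurableSet[MeasurableSpace.comap W inferInstance]
      {ω | (μ⟦Z ⁻¹' B | MeasurableSpace.comap W inferInstance⟧) ω = 1} :=
    stronglyMeasurable_condExp.measurable (measurableSet_singleton 1)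
  exact ⟨S, hS, hWS ▸ ae_eq_setOf_condExp_eq_one hW.comap_le (hZ hB) zero_or_one⟩

theorem preimage_ae_eq_preimage_of_condIndepFun_of_absolutelyContinuous {X X' : Ω → α} {W : Ω → γ}
    (hX : Measurable X) (hX' : Measurable X') (hW : Measurable W) {f : α × γ → β}
    (hf : Measurable f)
    (h : CondIndepFun (MeasurableSpace.comap W inferInstance) hW.comap_le
      X' (fun ω => f (X' ω, W ω)) μ)
    (hac : μ.map (fun ω => (X ω, W ω)) ≪ μ.map (fun ω => (X' ω, W ω)))
    {B : Set β} (hB : MeasurableSet B) :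
    (fun ω => f (X' ω, W ω)) ⁻¹' B =ᵐ[μ] (fun ω => f (X ω, W ω)) ⁻¹' B := by
  have hZ : Measurable fun ω => f (X' ω, W ω) := by fun_prop
  have hself := (condIndepFun_prodMk_left_of_measurable h hX' hZ (comap_measurable W)).comp
    hf measurable_id
  obtain ⟨S, hS, hBS⟩ := exists_preimage_ae_eq_of_condIndepFun_self hZ hW hself hB
  have hlaw : ∀ᵐ p ∂μ.map (fun ω => (X' ω, W ω)), f p ∈ B ↔ p.2 ∈ S :=
    (ae_map_iff (by fun_prop) ((hf hB).iff (measurable_snd hS))).2 hBS.mem_iff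
  have hBS' : (fun ω => f (X ω, W ω)) ⁻¹' B =ᵐ[μ] W ⁻¹' S :=
    Filter.eventuallyEq_set.2 (ae_of_ae_map (by fun_prop) (hac.ae_le hlaw))
  exact hBS.trans hBS'.symm

end CondIndep

section CountableInterFilter

open Filter

variable {Ω α β γ : Type*} [MeasurableSpace α] [MeasurableSpace β] {l : Filter Ω}
  [CountableInterFilter l] {Z Z' : Ω → β}

theorem preimage_prodMk_eventuallyEq (Y : Ω → α)
    (h : ∀ B, MeasurableSet B → Z ⁻¹' B =ᶠ[l] Z' ⁻¹' B) {C : Set (α × β)} (hC : MeasurableSet C) :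
    (fun ω => (Y ω, Z ω)) ⁻¹' C =ᶠ[l] (fun ω => (Y ω, Z' ω)) ⁻¹' C := by
  induction C, hC using MeasurableSpace.induction_on_inter generateFrom_prod.symm
    isPiSystem_prod with
  | empty => rfl
  | basic _ hst =>
    obtain ⟨s, -, t, ht, rfl⟩ := hst
    simpa only [Set.mk_preimage_prod] using (EventuallyEq.refl l (Y ⁻¹' s)).inter (h t ht)
  | compl _ _ hC => exact hC.compl
  | iUnion C _ _ hC =>
    simpa only [Set.preimage_iUnion] using Filter.EventuallyEq.countable_iUnion hC

theorem comp_prodMk_eventuallyEq [MeasurableSpace γ] [MeasurableSpace.CountablySeparated γ]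
    (Y : Ω → α) (h : ∀ B, MeasurableSet B → Z ⁻¹' B =ᶠ[l] Z' ⁻¹' B)
    {L : α × β → γ} (hL : Measurable L) :
    (fun ω => L (Y ω, Z ω)) =ᶠ[l] fun ω => L (Y ω, Z' ω) :=
  EventuallyEq.of_forall_separating_preimage MeasurableSet fun _ hU =>
    preimage_prodMk_eventuallyEq Y h (hL hU)

end CountableInterFilter

theorem rfi_lemma2_general {Ω Ej EW EY EYh : Type*} [MeasurableSpace Ω] [StandardBorelSpace Ω]
    [MeasurableSpace Ej] [MeasurableSpace EW] [MeasurableSpace EY] [MeasurableSpace EYh]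
    (μ : Measure Ω) [IsFiniteMeasure μ] (Xj Xtil : Ω → Ej) (W : Ω → EW) (Y : Ω → EY)
    (hXj : Measurable Xj) (hXtil : Measurable Xtil) (hW : Measurable W)
    (f : Ej × EW → EYh) (hf : Measurable f) (L : EY × EYh → ℝ) (hL : Measurable L)
    (hac : μ.map (fun ω => (Xj ω, W ω)) ≪ μ.map (fun ω => (Xtil ω, W ω)))
    (hciPred : CondIndepFun (MeasurableSpace.comap W inferInstance) hW.comap_le
      Xtil (fun ω => f (Xtil ω, W ω)) μ) :
    (fun ω => L (Y ω, f (Xtil ω, W ω))) =ᵐ[μ] fun ω => L (Y ω, f (Xj ω, W ω)) :=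
  comp_prodMk_eventuallyEq Y
    (fun _ hB => preimage_ae_eq_preimage_of_condIndepFun_of_absolutelyContinuous hXj hXtil hW hf
      hciPred hac hB) hL

/-- **Lemma 2**: if the prediction on the perturbed input is conditionally independent of the
replacement variable `X̃` given the remaining features `(X_U, X_G)`, and every observationally
possible feature value is interventionally possible, then `RFI_j^G = 0`. -/
theorem rfi_lemma2
    {Ω Ej EU EG EY EYh : Type*}
    [MeasurableSpace Ω] [StandardBorelSpace Ω] [Nonempty Ω]
    [MeasurableSpace Ej] [StandardBorelSpace Ej] [Nonempty Ej]
    [MeasurableSpace EU] [StandardBorelSpace EU] [Nonempty EU]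
    [MeasurableSpace EG] [StandardBorelSpace EG] [Nonempty EG]
    [MeasurableSpace EY] [StandardBorelSpace EY] [Nonempty EY]
    [MeasurableSpace EYh]
    (μ : Measure Ω) [IsProbabilityMeasure μ]
    (Xj Xtil : Ω → Ej) (XU : Ω → EU) (XG : Ω → EG) (Y : Ω → EY)
    (hXj : Measurable Xj) (hXtil : Measurable Xtil)
    (hXU : Measurable XU) (hXG : Measurable XG) (hY : Measurable Y)
    (f : Ej × EU × EG → EYh) (hf : Measurable f)
    (L : EY × EYh → ℝ) (hL : Measurable L)
    (hint : Integrable (fun ω => L (Y ω, f (Xj ω, XU ω, XG ω))) μ)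
    (hint' : Integrable (fun ω => L (Y ω, f (Xtil ω, XU ω, XG ω))) μ)
    -- (i) the conditional distribution of `X̃` given `X_G` equals that of `X_j` given `X_G`
    (hrep : ∀ᵐ g ∂(μ.map XG), condDistrib Xtil XG μ g = condDistrib Xj XG μ g)
    -- (ii) `X̃` is conditionally independent of `(X_U, Y)` given `X_G`
    (hci : CondIndepFun (MeasurableSpace.comap XG inferInstance) hXG.comap_le Xtil
      (fun ω => (XU ω, Y ω)) μ)
    -- every observationally possible feature value is interventionally possible
    (hac : μ.map (fun ω => (Xj ω, XU ω, XG ω)) ≪ μ.map (fun ω => (Xtil ω, XU ω, XG ω)))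
    -- `X̃` is conditionally independent of the perturbed prediction `Ŷ_rep` given `(X_U, X_G)`
    (hciPred : CondIndepFun
      (MeasurableSpace.comap (fun ω => (XU ω, XG ω)) inferInstance)
      ((hXU.prodMk hXG).comap_le) Xtil (fun ω => f (Xtil ω, XU ω, XG ω)) μ) :
    (∫ ω, L (Y ω, f (Xtil ω, XU ω, XG ω)) ∂μ) - (∫ ω, L (Y ω, f (Xj ω, XU ω, XG ω)) ∂μ) = 0 := by
  rw [integral_congr_ae (rfi_lemma2_general μ Xj Xtil (fun ω => (XU ω, XG ω)) Y hXj hXtil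
    (hXU.prodMk hXG) f hf L hL hac hciPred), sub_self]
end

section
/- Let X̃ be a replacement variable for X_j relative to G. If RFI_j^G ≠ 0, then X_j is NOT conditionally independent of the pair (X_U, Y) given X_G (data-level implication of nonzero relative feature importance). -/
open MeasureTheory ProbabilityTheory
open scoped ProbabilityTheory

/-! Given a σ-algebra `m`, two variables that are both conditionally independent of `W` and have the
same conditional probabilities have the same joint law with `W` and any `m`-measurable `Z`, because
for `s ∈ m` the mass of `s ∩ {X ∈ t} ∩ {W ∈ u}` is the integral over `s` of
`P(X ∈ t | m) * P(W ∈ u | m)`. If `X_j` were conditionally independent of `(X_U, Y)`, replacing it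
by `X̃` would therefore not change the law of the loss, hence not the risk either. -/

section JointLaw

variable {Ω E F : Type*} {m mΩ : MeasurableSpace Ω} [MeasurableSpace E] [MeasurableSpace F]
  {μ : Measure Ω} [IsFiniteMeasure μ] {X X' : Ω → E} {W : Ω → F}

lemma condExp_preimage_ae_eq_of_condDistrib_ae_eq_s6 {G : Type*} [MeasurableSpace G]
    [StandardBorelSpace E] [Nonempty E] {Z : Ω → G}
    (hX : Measurable X) (hX' : Measurable X') (hZ : Measurable Z)
    (h : condDistrib X Z μ =ᵐ[μ.map Z] condDistrib X' Z μ) {t : Set E} (ht : MeasurableSet t) :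
    μ⟦X ⁻¹' t | MeasurableSpace.comap Z inferInstance⟧
      =ᵐ[μ] μ⟦X' ⁻¹' t | MeasurableSpace.comap Z inferInstance⟧ := by
  refine (condDistrib_ae_eq_condExp hZ hX ht).symm.trans (.trans ?_
    (condDistrib_ae_eq_condExp hZ hX' ht))
  filter_upwards [ae_of_ae_map hZ.aemeasurable h] with ω hω
  rw [hω]

variable [StandardBorelSpace Ω] {hm : m ≤ mΩ}

lemma measureReal_inter_preimage_eq_setIntegral_condExp_mul (hX : Measurable X) (hW : Measurable W)
    (h : CondIndepFun m hm X W μ) {s : Set Ω} {t : Set E} {u : Set F}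
    (hs : MeasurableSet[m] s) (ht : MeasurableSet t) (hu : MeasurableSet u) :
    μ.real (s ∩ (X ⁻¹' t ∩ W ⁻¹' u))
      = ∫ ω in s, (μ⟦X ⁻¹' t | m⟧) ω * (μ⟦W ⁻¹' u | m⟧) ω ∂μ := by
  have htu : MeasurableSet (X ⁻¹' t ∩ W ⁻¹' u) := (hX ht).inter (hW hu)
  calc μ.real (s ∩ (X ⁻¹' t ∩ W ⁻¹' u))
    _ = ∫ ω in s, (X ⁻¹' t ∩ W ⁻¹' u).indicator (fun _ ↦ (1 : ℝ)) ω ∂μ := by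
      rw [setIntegral_indicator htu, setIntegral_const, smul_eq_mul, mul_one]
    _ = ∫ ω in s, (μ⟦X ⁻¹' t ∩ W ⁻¹' u | m⟧) ω ∂μ :=
      (setIntegral_condExp hm ((integrable_const 1).indicator htu) hs).symm
    _ = ∫ ω in s, (μ⟦X ⁻¹' t | m⟧) ω * (μ⟦W ⁻¹' u | m⟧) ω ∂μ :=
      integral_congr_ae <| ae_restrict_of_ae <|
        (condIndepFun_iff_condExp_inter_preimage_eq_mul hX hW).1 h t u ht hu

lemma identDistrib_prodMk_of_condIndepFun_s6 {G : Type*} [MeasurableSpace G] {Z : Ω → G}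
    (hX : Measurable X) (hX' : Measurable X') (hW : Measurable W) (hZ : Measurable[m] Z)
    (h : CondIndepFun m hm X W μ) (h' : CondIndepFun m hm X' W μ)
    (hXX' : ∀ t, MeasurableSet t → μ⟦X ⁻¹' t | m⟧ =ᵐ[μ] μ⟦X' ⁻¹' t | m⟧) :
    IdentDistrib (fun ω ↦ (Z ω, X ω, W ω)) (fun ω ↦ (Z ω, X' ω, W ω)) μ μ := by
  have hZ_ambient : Measurable Z := hZ.mono hm le_rfl
  refine ⟨by fun_prop, by fun_prop, Measure.ext_prod₃ fun {s t u} hs ht hu ↦ ?_⟩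
  rw [Measure.map_apply (by fun_prop) (hs.prod (ht.prod hu)),
    Measure.map_apply (by fun_prop) (hs.prod (ht.prod hu)),
    Set.mk_preimage_prod, Set.mk_preimage_prod, Set.mk_preimage_prod, Set.mk_preimage_prod,
    ← measureReal_eq_measureReal_iff,
    measureReal_inter_preimage_eq_setIntegral_condExp_mul hX hW h (hZ hs) ht hu,
    measureReal_inter_preimage_eq_setIntegral_condExp_mul hX' hW h' (hZ hs) ht hu]
  exact integral_congr_ae <| ae_restrict_of_ae <| (hXX' t ht).mul .rfl

end JointLaw

theorem rfi_theorem1_data_level_general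
    {Ω Ej EU EG EY EYh E : Type*} [MeasurableSpace Ω] [StandardBorelSpace Ω]
    [MeasurableSpace Ej] [StandardBorelSpace Ej] [Nonempty Ej]
    [MeasurableSpace EU] [MeasurableSpace EG] [MeasurableSpace EY] [MeasurableSpace EYh]
    [MeasurableSpace E] (μ : Measure Ω) [IsFiniteMeasure μ]
    (Xj Xtil : Ω → Ej) (XU : Ω → EU) (XG : Ω → EG) (Y : Ω → EY)
    (hXj : Measurable Xj) (hXtil : Measurable Xtil)
    (hXU : Measurable XU) (hXG : Measurable XG) (hY : Measurable Y)
    (f : Ej × EU × EG → EYh) (hf : Measurable f) (L : EY × EYh → E) (hL : Measurable L)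
    (hrep : condDistrib Xtil XG μ =ᵐ[μ.map XG] condDistrib Xj XG μ)
    (hci : Xtil ⟂ᵢ[XG, hXG; μ] (fun ω ↦ (XU ω, Y ω)))
    (hloss : ¬ IdentDistrib (fun ω ↦ L (Y ω, f (Xtil ω, XU ω, XG ω)))
      (fun ω ↦ L (Y ω, f (Xj ω, XU ω, XG ω))) μ μ) :
    ¬ Xj ⟂ᵢ[XG, hXG; μ] (fun ω ↦ (XU ω, Y ω)) := by
  intro hcj
  have hjoint : IdentDistrib (fun ω ↦ (XG ω, Xtil ω, XU ω, Y ω))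
      (fun ω ↦ (XG ω, Xj ω, XU ω, Y ω)) μ μ :=
    identDistrib_prodMk_of_condIndepFun_s6 hXtil hXj (hXU.prodMk hY) (comap_measurable XG) hci hcj
      fun _ ht ↦ condExp_preimage_ae_eq_of_condDistrib_ae_eq_s6 hXtil hXj hXG hrep ht
  have hloss_meas : Measurable fun p : EG × Ej × EU × EY ↦
      L (p.2.2.2, f (p.2.1, p.2.2.1, p.1)) := by fun_prop
  exact hloss (hjoint.comp hloss_meas)

/-- Data-level part of **Theorem 1**: nonzero relative feature importance implies that `X_j` is
not conditionally independent of `(X_U, Y)` given `X_G`. -/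
theorem rfi_theorem1_data_level
    {Ω Ej EU EG EY EYh : Type*}
    [MeasurableSpace Ω] [StandardBorelSpace Ω] [Nonempty Ω]
    [MeasurableSpace Ej] [StandardBorelSpace Ej] [Nonempty Ej]
    [MeasurableSpace EU] [StandardBorelSpace EU] [Nonempty EU]
    [MeasurableSpace EG] [StandardBorelSpace EG] [Nonempty EG]
    [MeasurableSpace EY] [StandardBorelSpace EY] [Nonempty EY]
    [MeasurableSpace EYh]
    (μ : Measure Ω) [IsProbabilityMeasure μ]
    (Xj Xtil : Ω → Ej) (XU : Ω → EU) (XG : Ω → EG) (Y : Ω → EY)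
    (hXj : Measurable Xj) (hXtil : Measurable Xtil)
    (hXU : Measurable XU) (hXG : Measurable XG) (hY : Measurable Y)
    (f : Ej × EU × EG → EYh) (hf : Measurable f)
    (L : EY × EYh → ℝ) (hL : Measurable L)
    (hint : Integrable (fun ω => L (Y ω, f (Xj ω, XU ω, XG ω))) μ)
    (hint' : Integrable (fun ω => L (Y ω, f (Xtil ω, XU ω, XG ω))) μ)
    -- (i) the conditional distribution of `X̃` given `X_G` equals that of `X_j` given `X_G`
    (hrep : ∀ᵐ g ∂(μ.map XG), condDistrib Xtil XG μ g = condDistrib Xj XG μ g)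
    -- (ii) `X̃` is conditionally independent of `(X_U, Y)` given `X_G`
    (hci : CondIndepFun (MeasurableSpace.comap XG inferInstance) hXG.comap_le Xtil
      (fun ω => (XU ω, Y ω)) μ)
    -- nonzero relative feature importance
    (hRFI : (∫ ω, L (Y ω, f (Xtil ω, XU ω, XG ω)) ∂μ)
      - (∫ ω, L (Y ω, f (Xj ω, XU ω, XG ω)) ∂μ) ≠ 0) :
    ¬ CondIndepFun (MeasurableSpace.comap XG inferInstance) hXG.comap_le Xj
      (fun ω => (XU ω, Y ω)) μ :=
  rfi_theorem1_data_level_general μ Xj Xtil XU XG Y hXj hXtil hXU hXG hY f hf L hL hrep hci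
    fun hloss ↦ hRFI (sub_eq_zero.2 hloss.integral_eq)
end

section
/- Let X̃ be a replacement variable for X_j relative to G whose conditional independence condition is strengthened to: X̃ is conditionally independent of (X_UU, X_N, Y) given X_G; and let X̃' be a replacement variable for X_j relative to (G, N), i.e. condDistrib X̃' (X_G, X_N) μ = condDistrib X_j (X_G, X_N) μ almost everywhere and X̃' is conditionally independent of (X_UU, Y) given (X_G, X_N). If X_j is conditionally independent of X_N given X_G, then the law of (X̃, Y, X_UU, X_G, X_N) under μ equals the law of (X̃', Y, X_UU, X_G, X_N) under μ. -/
open MeasureTheory ProbabilityTheory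
open scoped ProbabilityTheory

/-!
If `X ⫫ Z | G`, the joint law of `X` with `(G, Z)` is determined by the law of `(G, Z)` and the
conditional law of `X` given `G`. Given `X_G`, both `X̃` and `X_j` are independent of `X_N` and they
have the same conditional law, so they also have the same conditional law given `(X_G, X_N)`, which
is that of `X̃'`. Weak union turns `X̃ ⫫ (X_N, X_UU, Y) | X_G` into `X̃ ⫫ (X_UU, Y) | (X_G, X_N)`,
the independence that `X̃'` satisfies as well, so the joint laws of `X̃` and `X̃'` with
`(X_G, X_N, X_UU, Y)` agree.
-/

section CondDistrib

variable {Ω A B E : Type*} {mΩ : MeasurableSpace Ω} {mA : MeasurableSpace A}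
  {mB : MeasurableSpace B} {mE : MeasurableSpace E}

lemma map_prodMap_compProd_comap (ν : Measure A) [SFinite ν] {f : A → B} (hf : Measurable f)
    (κ : Kernel B E) [IsSFiniteKernel κ] :
    (ν ⊗ₘ κ.comap f hf).map (Prod.map f id) = ν.map f ⊗ₘ κ := by
  ext s hs
  have hfid : Measurable (Prod.map f (id : E → E)) := hf.prodMap measurable_id
  rw [Measure.map_apply hfid hs, Measure.compProd_apply (hfid hs), Measure.compProd_apply hs,
    lintegral_map (Kernel.measurable_kernel_prodMk_left hs) hf]
  rfl

lemma prodMkRight_ae_eq {ν : Measure (A × B)} {κ η : Kernel A E} (h : κ =ᵐ[ν.fst] η) :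
    κ.prodMkRight B =ᵐ[ν] η.prodMkRight B :=
  ae_of_ae_map measurable_fst.aemeasurable h

variable [StandardBorelSpace E] [Nonempty E] {μ : Measure Ω} [IsFiniteMeasure μ]

lemma condDistrib_comp_ae_eq_of_ae_eq_comap {W : Ω → A} {X : Ω → E} (hW : AEMeasurable W μ)
    (hX : AEMeasurable X μ) {f : A → B} (hf : Measurable f) {κ : Kernel B E} [IsFiniteKernel κ]
    (h : condDistrib X W μ =ᵐ[μ.map W] κ.comap f hf) :
    condDistrib X (f ∘ W) μ =ᵐ[μ.map (f ∘ W)] κ := by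
  refine condDistrib_ae_eq_of_measure_eq_compProd _ hX ?_
  calc μ.map (fun ω ↦ ((f ∘ W) ω, X ω))
    _ = (μ.map (fun ω ↦ (W ω, X ω))).map (Prod.map f id) :=
      (AEMeasurable.map_map_of_aemeasurable (hf.prodMap measurable_id).aemeasurable
        (hW.prodMk hX)).symm
    _ = (μ.map W ⊗ₘ κ.comap f hf).map (Prod.map f id) := by
      rw [(condDistrib_ae_eq_iff_measure_eq_compProd W hX _).1 h]
    _ = μ.map (f ∘ W) ⊗ₘ κ := by
      rw [map_prodMap_compProd_comap,
        AEMeasurable.map_map_of_aemeasurable hf.aemeasurable hW]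

end CondDistrib

section CondIndepFun

variable {Ω E F H K : Type*} {mΩ : MeasurableSpace Ω} [StandardBorelSpace Ω]
  {mE : MeasurableSpace E} [StandardBorelSpace E] [Nonempty E]
  {mF : MeasurableSpace F} [StandardBorelSpace F] [Nonempty F]
  {mH : MeasurableSpace H} [StandardBorelSpace H] [Nonempty H]
  {mK : MeasurableSpace K} {μ : Measure Ω} [IsFiniteMeasure μ]
  {X X' : Ω → E} {V : Ω → F} {Z : Ω → H} {G : Ω → K}

lemma condIndepFun_weak_union (hX : Measurable X) (hV : Measurable V) (hZ : Measurable Z)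
    (hG : Measurable G) (h : X ⟂ᵢ[G, hG; μ] (fun ω ↦ (V ω, Z ω))) :
    X ⟂ᵢ[fun ω ↦ (G ω, V ω), hG.prodMk hV; μ] Z := by
  have hXV : X ⟂ᵢ[G, hG; μ] V := h.comp measurable_id measurable_fst
  have given_G_VZ := (condIndepFun_iff_condDistrib_prod_ae_eq_prodMkRight hX (hV.prodMk hZ) hG).1
    h.symm
  have given_GV := (condIndepFun_iff_condDistrib_prod_ae_eq_prodMkRight hX hV hG).1 hXV.symm
  have given_GV_Z : condDistrib X (fun ω ↦ ((G ω, V ω), Z ω)) μ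
      =ᵐ[μ.map (fun ω ↦ ((G ω, V ω), Z ω))] ((condDistrib X G μ).prodMkRight F).prodMkRight H :=
    condDistrib_comp_ae_eq_of_ae_eq_comap (hG.prodMk (hV.prodMk hZ)).aemeasurable hX.aemeasurable
      MeasurableEquiv.prodAssoc.symm.measurable given_G_VZ
  rw [← Measure.fst_map_prodMk hZ] at given_GV
  exact ((condIndepFun_iff_condDistrib_prod_ae_eq_prodMkRight hX hZ (hG.prodMk hV)).2
    (given_GV_Z.trans (prodMkRight_ae_eq given_GV.symm))).symm

lemma condDistrib_prodMk_ae_eq_of_condIndepFun (hX : Measurable X) (hX' : Measurable X')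
    (hZ : Measurable Z) (hG : Measurable G) (h : X ⟂ᵢ[G, hG; μ] Z) (h' : X' ⟂ᵢ[G, hG; μ] Z)
    (hXX' : condDistrib X G μ =ᵐ[μ.map G] condDistrib X' G μ) :
    condDistrib X (fun ω ↦ (G ω, Z ω)) μ
      =ᵐ[μ.map (fun ω ↦ (G ω, Z ω))] condDistrib X' (fun ω ↦ (G ω, Z ω)) μ := by
  rw [← Measure.fst_map_prodMk hZ] at hXX'
  have drop_Z := (condIndepFun_iff_condDistrib_prod_ae_eq_prodMkRight hX hZ hG).1 h.symm
  have drop_Z' := (condIndepFun_iff_condDistrib_prod_ae_eq_prodMkRight hX' hZ hG).1 h'.symm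
  exact (drop_Z.trans (prodMkRight_ae_eq hXX')).trans drop_Z'.symm

lemma map_prodMk_eq_of_condIndepFun (hX : Measurable X) (hX' : Measurable X')
    (hZ : Measurable Z) (hG : Measurable G) (h : X ⟂ᵢ[G, hG; μ] Z) (h' : X' ⟂ᵢ[G, hG; μ] Z)
    (hXX' : condDistrib X G μ =ᵐ[μ.map G] condDistrib X' G μ) :
    μ.map (fun ω ↦ ((G ω, Z ω), X ω)) = μ.map (fun ω ↦ ((G ω, Z ω), X' ω)) := by
  rw [← compProd_map_condDistrib hX.aemeasurable, ← compProd_map_condDistrib hX'.aemeasurable,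
    Measure.compProd_congr (condDistrib_prodMk_ae_eq_of_condIndepFun hX hX' hZ hG h h' hXX')]

end CondIndepFun

theorem rfi_theorem2_distributional_general
    {Ω Ej EUU EN EG EY : Type*}
    [MeasurableSpace Ω] [StandardBorelSpace Ω]
    [MeasurableSpace Ej] [StandardBorelSpace Ej] [Nonempty Ej]
    [MeasurableSpace EUU] [StandardBorelSpace EUU] [Nonempty EUU]
    [MeasurableSpace EN] [StandardBorelSpace EN] [Nonempty EN]
    [MeasurableSpace EG]
    [MeasurableSpace EY] [StandardBorelSpace EY] [Nonempty EY]
    (μ : Measure Ω) [IsFiniteMeasure μ]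
    (Xj Xtil Xtil' : Ω → Ej) (XUU : Ω → EUU) (XN : Ω → EN) (XG : Ω → EG) (Y : Ω → EY)
    (hXj : Measurable Xj) (hXtil : Measurable Xtil) (hXtil' : Measurable Xtil')
    (hXUU : Measurable XUU) (hXN : Measurable XN) (hXG : Measurable XG) (hY : Measurable Y)
    (hrep : condDistrib Xtil XG μ =ᵐ[μ.map XG] condDistrib Xj XG μ)
    (hci : Xtil ⟂ᵢ[XG, hXG; μ] (fun ω ↦ (XUU ω, XN ω, Y ω)))
    (hrep' : condDistrib Xtil' (fun ω ↦ (XG ω, XN ω)) μ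
      =ᵐ[μ.map (fun ω ↦ (XG ω, XN ω))] condDistrib Xj (fun ω ↦ (XG ω, XN ω)) μ)
    (hci' : Xtil' ⟂ᵢ[fun ω ↦ (XG ω, XN ω), hXG.prodMk hXN; μ] (fun ω ↦ (XUU ω, Y ω)))
    (hciXjXN : Xj ⟂ᵢ[XG, hXG; μ] XN) :
    μ.map (fun ω ↦ (Xtil ω, Y ω, XUU ω, XG ω, XN ω))
      = μ.map (fun ω ↦ (Xtil' ω, Y ω, XUU ω, XG ω, XN ω)) := by
  have hGN := hXG.prodMk hXN
  have hUY := hXUU.prodMk hY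
  have til_indep_N : Xtil ⟂ᵢ[XG, hXG; μ] XN :=
    hci.comp measurable_id (measurable_fst.comp measurable_snd)
  have til_indep_UY : Xtil ⟂ᵢ[fun ω ↦ (XG ω, XN ω), hGN; μ] (fun ω ↦ (XUU ω, Y ω)) :=
    condIndepFun_weak_union hXtil hXN hUY hXG <|
      hci.comp (ψ := fun p : EUU × EN × EY ↦ (p.2.1, p.1, p.2.2)) measurable_id (by fun_prop)
  have same_law_given_GN : condDistrib Xtil (fun ω ↦ (XG ω, XN ω)) μ
      =ᵐ[μ.map (fun ω ↦ (XG ω, XN ω))] condDistrib Xtil' (fun ω ↦ (XG ω, XN ω)) μ :=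
    (condDistrib_prodMk_ae_eq_of_condIndepFun hXtil hXj hXN hXG til_indep_N hciXjXN hrep).trans
      hrep'.symm
  have same_joint_law :=
    map_prodMk_eq_of_condIndepFun hXtil hXtil' hUY hGN til_indep_UY hci' same_law_given_GN
  let reorder : ((EG × EN) × EUU × EY) × Ej → Ej × EY × EUU × EG × EN :=
    fun p ↦ (p.2, p.1.2.2, p.1.2.1, p.1.1)
  have hreorder : Measurable reorder := by fun_prop
  have reordered := congrArg (Measure.map reorder) same_joint_law
  rwa [Measure.map_map hreorder (by fun_prop), Measure.map_map hreorder (by fun_prop)] at reordered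

/-- Distributional core of **Theorem 2**: if `X_j ⫫ X_N | X_G`, then the interventional
distribution relative to `G` coincides with the interventional distribution relative to
`G ∪ N`. -/
theorem rfi_theorem2_distributional
    {Ω Ej EUU EN EG EY : Type*}
    [MeasurableSpace Ω] [StandardBorelSpace Ω] [Nonempty Ω]
    [MeasurableSpace Ej] [StandardBorelSpace Ej] [Nonempty Ej]
    [MeasurableSpace EUU] [StandardBorelSpace EUU] [Nonempty EUU]
    [MeasurableSpace EN] [StandardBorelSpace EN] [Nonempty EN]
    [MeasurableSpace EG] [StandardBorelSpace EG] [Nonempty EG]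
    [MeasurableSpace EY] [StandardBorelSpace EY] [Nonempty EY]
    (μ : Measure Ω) [IsProbabilityMeasure μ]
    (Xj Xtil Xtil' : Ω → Ej) (XUU : Ω → EUU) (XN : Ω → EN) (XG : Ω → EG) (Y : Ω → EY)
    (hXj : Measurable Xj) (hXtil : Measurable Xtil) (hXtil' : Measurable Xtil')
    (hXUU : Measurable XUU) (hXN : Measurable XN) (hXG : Measurable XG) (hY : Measurable Y)
    -- `X̃` is a replacement variable for `X_j` relative to `G` (strengthened version):
    (hrep : ∀ᵐ g ∂(μ.map XG), condDistrib Xtil XG μ g = condDistrib Xj XG μ g)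
    (hci : CondIndepFun (MeasurableSpace.comap XG inferInstance) hXG.comap_le Xtil
      (fun ω => (XUU ω, XN ω, Y ω)) μ)
    -- `X̃'` is a replacement variable for `X_j` relative to `(G, N)`:
    (hrep' : ∀ᵐ p ∂(μ.map (fun ω => (XG ω, XN ω))),
      condDistrib Xtil' (fun ω => (XG ω, XN ω)) μ p = condDistrib Xj (fun ω => (XG ω, XN ω)) μ p)
    (hci' : CondIndepFun
      (MeasurableSpace.comap (fun ω => (XG ω, XN ω)) inferInstance)
      ((hXG.prodMk hXN).comap_le) Xtil' (fun ω => (XUU ω, Y ω)) μ)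
    -- `X_j` is conditionally independent of `X_N` given `X_G`
    (hciXjXN : CondIndepFun (MeasurableSpace.comap XG inferInstance) hXG.comap_le Xj XN μ) :
    μ.map (fun ω => (Xtil ω, Y ω, XUU ω, XG ω, XN ω))
      = μ.map (fun ω => (Xtil' ω, Y ω, XUU ω, XG ω, XN ω)) :=
  rfi_theorem2_distributional_general μ Xj Xtil Xtil' XUU XN XG Y hXj hXtil hXtil' hXUU hXN hXG hY
    hrep hci hrep' hci' hciXjXN
end
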